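/- There exists a constant c such that for every positive integer n there is a 1-avoiding 2n-point set P = B ∪ R in general position (with |B| = |R| = n) in which every focal parallel set has size at most c. -/

import Mathlib

open Set

abbrev Pt : Type := ℝ × ℝ

/-- Signed area determinant of the triple `(p, q, r)`. -/
def det2 (p q r : Pt) : ℝ :=
  (q.1 - p.1) * (r.2 - p.2) - (q.2 - p.2) * (r.1 - p.1)

/-- `P` is in general position: no three distinct points of `P` are collinear. -/
def GenPos (P : Set Pt) : Prop :=
  ∀ p ∈ P, ∀ q ∈ P, ∀ r ∈ P, p ≠ q → p ≠ r → q ≠ r →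
    ¬ Collinear ℝ ({p, q, r} : Set Pt)

/-- `A` and `B` can be separated by a line. -/
def LineSeparated (A B : Set Pt) : Prop :=
  ∃ a b c : ℝ, (a, b) ≠ ((0 : ℝ), (0 : ℝ)) ∧
    (∀ p ∈ A, a * p.1 + b * p.2 < c) ∧ (∀ p ∈ B, c < a * p.1 + b * p.2)

/-- The line `{x | a x₁ + b x₂ = c}` determined by the triple `v = (a, b, c)`. -/
def lineSet (v : ℝ × ℝ × ℝ) : Set Pt := {x | v.1 * x.1 + v.2.1 * x.2 = v.2.2}

/-- The complement of the union of the lines of `L`. -/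
def linesCompl (L : Finset (ℝ × ℝ × ℝ)) : Set Pt := {y | ∀ v ∈ L, y ∉ lineSet v}

/-- `L` is a spoke set for `P`: a finite set of (nondegenerate) pairwise non-parallel
lines such that every unbounded connected component of the complement of their union
contains at least one point of `P`. -/
def IsSpokeSet (P : Set Pt) (L : Finset (ℝ × ℝ × ℝ)) : Prop :=
  (∀ v ∈ L, (v.1, v.2.1) ≠ ((0 : ℝ), (0 : ℝ))) ∧
  (∀ v ∈ L, ∀ u ∈ L, v ≠ u → v.1 * u.2.1 ≠ u.1 * v.2.1) ∧
  (∀ x : Pt, x ∈ linesCompl L →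
    ¬ Bornology.IsBounded (connectedComponentIn (linesCompl L) x) →
    ∃ p ∈ P, p ∈ connectedComponentIn (linesCompl L) x)

/-- `p` is strictly above the non-vertical line `y = l.1 * x + l.2`. -/
def Above (l : ℝ × ℝ) (p : Pt) : Prop := l.1 * p.1 + l.2 < p.2

/-- The two-coloured point set `B ∪ R` has a parallel set of size `k`: there are
non-vertical lines `L 0, …, L k` and subsets `B' ⊆ B` and `R' ⊆ R` of size `k` such that
the sets of points of `B'` (resp. `R'`) strictly above the lines are strictly increasing. -/
def HasParallelSet (B R : Finset Pt) (k : ℕ) : Prop :=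
  ∃ L : Fin (k + 1) → ℝ × ℝ, ∃ B' ⊆ B, ∃ R' ⊆ R, B'.card = k ∧ R'.card = k ∧
    ∀ i : Fin k,
      {p ∈ (↑B' : Set Pt) | Above (L i.castSucc) p} ⊂
        {p ∈ (↑B' : Set Pt) | Above (L i.succ) p} ∧
      {p ∈ (↑R' : Set Pt) | Above (L i.castSucc) p} ⊂
        {p ∈ (↑R' : Set Pt) | Above (L i.succ) p}

/-- `A` avoids `B`: no line through two distinct points of `A` meets the convex hull
of `B`. -/
def Avoids (A B : Set Pt) : Prop :=
  ∀ p ∈ A, ∀ q ∈ A, p ≠ q → ∀ x ∈ convexHull ℝ B, det2 p q x ≠ 0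

/-- `B ∪ R` is a colour-separable `2n`-point set. -/
def ColourSep (n : ℕ) (B R : Finset Pt) : Prop :=
  Disjoint B R ∧ B.card = n ∧ R.card = n ∧ GenPos (↑B ∪ ↑R) ∧ LineSeparated ↑B ↑R

/-- `B ∪ R` is a `1`-avoiding point set with colour classes of size `n`:
colour-separable and `B` avoids `R`. -/
def OneAvoiding (n : ℕ) (B R : Finset Pt) : Prop :=
  ColourSep n B R ∧ Avoids ↑B ↑R

/-- `B ∪ R` has a focal parallel set of size `k`: a parallel set all of whose lines pass
through a common point. -/
def HasFocalParallelSet (B R : Finset Pt) (k : ℕ) : Prop :=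
  ∃ L : Fin (k + 1) → ℝ × ℝ,
    (∃ q : Pt, ∀ i, q.2 = (L i).1 * q.1 + (L i).2) ∧
    ∃ B' ⊆ B, ∃ R' ⊆ R, B'.card = k ∧ R'.card = k ∧
      ∀ i : Fin k,
        {p ∈ (↑B' : Set Pt) | Above (L i.castSucc) p} ⊂
          {p ∈ (↑B' : Set Pt) | Above (L i.succ) p} ∧
        {p ∈ (↑R' : Set Pt) | Above (L i.castSucc) p} ⊂
          {p ∈ (↑R' : Set Pt) | Above (L i.succ) p}

/-!
Put the blue points near the line `x = 0` at heights `1, K, K², …` and the red points near the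
line `x = 1` at heights `0, 1, 2, …`, bending both columns slightly into parabolas `x = s + ε y²`
to reach general position. The lines of a parallel set cross both columns downwards, and passing
from `L 1` to `L 3` to `L 5` drops them in the blue column by at least `(K - 2) β` and then by at
most `2 β`, where `β` is a blue height, whereas in the red column the first drop is at most `O(n)`
times the second. But concurrent lines cut proportional drops on the two columns, which is
impossible once `K` is large compared with `n`.
-/

/-! ### Monotonicity and unions -/

lemma GenPos.mono {P Q : Set Pt} (hQ : GenPos Q) (hPQ : P ⊆ Q) : GenPos P :=
  fun p hp q hq r hr => hQ p (hPQ hp) q (hPQ hq) r (hPQ hr)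

lemma LineSeparated.mono {A A' B B' : Set Pt} (h : LineSeparated A' B') (hA : A ⊆ A')
    (hB : B ⊆ B') : LineSeparated A B := by
  obtain ⟨a, b, c, hab, hA', hB'⟩ := h
  exact ⟨a, b, c, hab, fun p hp => hA' p (hA hp), fun p hp => hB' p (hB hp)⟩

lemma LineSeparated.disjoint {A B : Finset Pt} (h : LineSeparated ↑A ↑B) : Disjoint A B := by
  obtain ⟨a, b, c, -, hA, hB⟩ := h
  exact Finset.disjoint_left.2 fun p hpA hpB => (hA p hpA).asymm (hB p hpB)

lemma Avoids.mono {A A' B B' : Set Pt} (h : Avoids A' B') (hA : A ⊆ A') (hB : B ⊆ B') :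
    Avoids A B :=
  fun p hp q hq hpq x hx => h p (hA hp) q (hA hq) hpq x (convexHull_mono hB hx)

lemma det2_eq_zero_of_collinear {p q r : Pt} (h : Collinear ℝ {p, q, r}) : det2 p q r = 0 := by
  obtain ⟨w, hw⟩ := (collinear_iff_of_mem (p₀ := p) (by simp)).1 h
  obtain ⟨a, rfl⟩ := hw q (by simp)
  obtain ⟨b, rfl⟩ := hw r (by simp)
  simp only [det2, vadd_eq_add, Prod.fst_add, Prod.snd_add, Prod.smul_fst, Prod.smul_snd,
    smul_eq_mul]
  ring

lemma Avoids.not_collinear {A B : Set Pt} (h : Avoids A B) {p q r : Pt} (hp : p ∈ A) (hq : q ∈ A)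
    (hpq : p ≠ q) (hr : r ∈ B) : ¬ Collinear ℝ {p, q, r} :=
  fun hc => h p hp q hq hpq r (subset_convexHull ℝ B hr) (det2_eq_zero_of_collinear hc)

lemma GenPos.union {A B : Set Pt} (hA : GenPos A) (hB : GenPos B) (hAB : Avoids A B)
    (hBA : Avoids B A) : GenPos (A ∪ B) := by
  rintro p (hp | hp) q (hq | hq) r (hr | hr) hpq hpr hqr
  · exact hA p hp q hq r hr hpq hpr hqr
  · exact hAB.not_collinear hp hq hpq hr
  · rw [Set.pair_comm q r]
    exact hAB.not_collinear hp hr hpr hq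
  · rw [Set.insert_comm, Set.pair_comm p r]
    exact hBA.not_collinear hq hr hqr hp
  · rw [Set.insert_comm, Set.pair_comm p r]
    exact hAB.not_collinear hq hr hqr hp
  · rw [Set.pair_comm q r]
    exact hBA.not_collinear hp hr hpr hq
  · exact hBA.not_collinear hp hq hpq hr
  · exact hB p hp q hq r hr hpq hpr hqr

/-! ### Thin strips -/

/-- A thin vertical rectangle of height `M` standing at abscissa `s`, containing one colour class.
Its width is chosen so that lines of slope at most `2 * M` vary by at most `1 / 8` across it. -/
def thinStrip (M s : ℝ) : Set Pt := Icc s (s + 1 / (16 * M)) ×ˢ Icc 0 M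

/-- The height at which the line `y = l.1 * x + l.2` crosses the vertical line `x = s`. -/
def heightAt (l : ℝ × ℝ) (s : ℝ) : ℝ := l.1 * s + l.2

lemma convex_thinStrip (M s : ℝ) : Convex ℝ (thinStrip M s) :=
  (convex_Icc _ _).prod (convex_Icc _ _)

section ThinStrip

variable {M s t : ℝ} {l : ℝ × ℝ} {p p' q q' : Pt}

lemma fst_le_of_mem_thinStrip (hM : 1 ≤ M) (hp : p ∈ thinStrip M s) : p.1 ≤ s + 1 / 16 :=
  hp.1.2.trans (by gcongr; linarith)

lemma lineSeparated_thinStrip (hM : 1 ≤ M) (hst : s + 1 ≤ t) :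
    LineSeparated (thinStrip M s) (thinStrip M t) := by
  refine ⟨1, 0, s + 1 / 2, by simp, fun p hp => ?_, fun p hp => ?_⟩
  · linarith [fst_le_of_mem_thinStrip hM hp]
  · linarith [hp.1.1]

lemma abs_slope_le_of_above_of_not_above (hM : 1 ≤ M) (hst : s + 1 ≤ t)
    (hp : p ∈ thinStrip M s) (hp' : p' ∈ thinStrip M s)
    (hq : q ∈ thinStrip M t) (hq' : q' ∈ thinStrip M t)
    (hlp : Above l p) (hlp' : ¬ Above l p') (hlq : Above l q) (hlq' : ¬ Above l q') :
    |l.1| ≤ 2 * M := by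
  rw [Above, not_lt] at hlp' hlq'
  rw [Above] at hlp hlq
  have hpq' : 1 / 2 ≤ q'.1 - p.1 := by linarith [fst_le_of_mem_thinStrip hM hp, hq'.1.1]
  have hp'q : 1 / 2 ≤ q.1 - p'.1 := by linarith [fst_le_of_mem_thinStrip hM hp', hq.1.1]
  have hlower : -M ≤ l.1 * (q'.1 - p.1) := by linarith [hp.2.2, hq'.2.1]
  have hupper : l.1 * (q.1 - p'.1) ≤ M := by linarith [hp'.2.1, hq.2.2]
  rw [abs_le]
  constructor <;> by_contra! hl <;> nlinarith

lemma abs_heightAt_fst_sub_heightAt_le (hM : 0 < M) (hl : |l.1| ≤ 2 * M)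
    (hp : p ∈ thinStrip M s) : |heightAt l p.1 - heightAt l s| ≤ 1 / 8 := by
  have hwidth : |p.1 - s| ≤ 1 / (16 * M) :=
    abs_le.2 ⟨(neg_nonpos.2 (by positivity)).trans (sub_nonneg.2 hp.1.1), by linarith [hp.1.2]⟩
  calc |heightAt l p.1 - heightAt l s| = |l.1| * |p.1 - s| := by
        rw [← abs_mul, heightAt, heightAt]; ring_nf
    _ ≤ 2 * M * (1 / (16 * M)) := by gcongr
    _ = 1 / 8 := by field_simp; norm_num

lemma heightAt_lt_of_above (hM : 0 < M) (hl : |l.1| ≤ 2 * M) (hp : p ∈ thinStrip M s)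
    (hlp : Above l p) : heightAt l s < p.2 + 1 / 8 := by
  have hlp : heightAt l p.1 < p.2 := hlp
  linarith [(abs_le.1 (abs_heightAt_fst_sub_heightAt_le hM hl hp)).1]

lemma le_heightAt_of_not_above (hM : 0 < M) (hl : |l.1| ≤ 2 * M) (hp : p ∈ thinStrip M s)
    (hlp : ¬ Above l p) : p.2 - 1 / 8 ≤ heightAt l s := by
  have hlp : p.2 ≤ heightAt l p.1 := not_lt.1 hlp
  linarith [(abs_le.1 (abs_heightAt_fst_sub_heightAt_le hM hl hp)).2]

end ThinStrip

lemma heightAt_sub_mul_comm_of_concurrent {q : Pt} {l₁ l₂ l₃ : ℝ × ℝ}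
    (h₁ : q.2 = heightAt l₁ q.1) (h₂ : q.2 = heightAt l₂ q.1) (h₃ : q.2 = heightAt l₃ q.1)
    (s t : ℝ) :
    (heightAt l₁ s - heightAt l₂ s) * (heightAt l₂ t - heightAt l₃ t) =
      (heightAt l₂ s - heightAt l₃ s) * (heightAt l₁ t - heightAt l₂ t) := by
  have heightAt_eq {l : ℝ × ℝ} (h : q.2 = heightAt l q.1) (x : ℝ) :
      heightAt l x = q.2 + l.1 * (x - q.1) := by rw [h, heightAt, heightAt]; ring
  simp only [heightAt_eq h₁, heightAt_eq h₂, heightAt_eq h₃]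
  ring

/-! ### Sweeps -/

/-- The lines `L 0, …, L k` sweep over the points `f 0, …, f (k - 1)` in this order: `f i` gets
above the line exactly between `L i` and `L (i + 1)`. -/
def Sweeps {k : ℕ} (L : Fin (k + 1) → ℝ × ℝ) (f : Fin k → Pt) : Prop :=
  ∀ i j, Above (L j) (f i) ↔ i.castSucc < j

lemma exists_sweeps_of_ssubset {S : Set Pt} {k : ℕ} {L : Fin (k + 1) → ℝ × ℝ}
    (hL : ∀ i : Fin k, {p ∈ S | Above (L i.castSucc) p} ⊂ {p ∈ S | Above (L i.succ) p}) :
    ∃ f : Fin k → Pt, (∀ i, f i ∈ S) ∧ Sweeps L f := by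
  have hmono : Monotone fun j => {p ∈ S | Above (L j) p} :=
    (Fin.strictMono_iff_lt_succ.2 hL).monotone
  choose f hf hf' using fun i => Set.exists_of_ssubset (hL i)
  refine ⟨f, fun i => (hf i).1, fun i j => ⟨fun hij => ?_, fun hij => ?_⟩⟩
  · by_contra! hji
    exact hf' i (hmono hji ⟨(hf i).1, hij⟩)
  · exact (hmono (Fin.castSucc_lt_iff_succ_le.1 hij) (hf i)).2

namespace Sweeps

lemma castLE {k m : ℕ} {L : Fin (k + 1) → ℝ × ℝ} {f : Fin k → Pt} (hf : Sweeps L f)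
    (hmk : m ≤ k) :
    Sweeps (fun j => L (Fin.castLE (Nat.succ_le_succ hmk) j)) fun i => f (Fin.castLE hmk i) :=
  fun i j => hf (Fin.castLE hmk i) (Fin.castLE (Nat.succ_le_succ hmk) j)

section Strips

variable {k : ℕ} {L : Fin (k + 1) → ℝ × ℝ} {f g : Fin k → Pt} {M s t : ℝ} {i i' : Fin k}
  {j : Fin (k + 1)}

lemma above (hf : Sweeps L f) (hij : i.castSucc < j) : Above (L j) (f i) := (hf i j).2 hij

lemma not_above (hf : Sweeps L f) (hji : j ≤ i.castSucc) : ¬ Above (L j) (f i) :=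
  fun h => hji.not_gt ((hf i j).1 h)

lemma abs_slope_le (hf : Sweeps L f) (hg : Sweeps L g) (hM : 1 ≤ M) (hst : s + 1 ≤ t)
    (hfs : ∀ i, f i ∈ thinStrip M s) (hgt : ∀ i, g i ∈ thinStrip M t)
    (hij : i.castSucc < j) (hji : j ≤ i'.castSucc) : |(L j).1| ≤ 2 * M :=
  abs_slope_le_of_above_of_not_above hM hst (hfs i) (hfs i') (hgt i) (hgt i')
    (hf.above hij) (hf.not_above hji) (hg.above hij) (hg.not_above hji)

lemma heightAt_lt (hf : Sweeps L f) (hM : 0 < M) (hfs : ∀ i, f i ∈ thinStrip M s)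
    (hl : |(L j).1| ≤ 2 * M) (hij : i.castSucc < j) : heightAt (L j) s < (f i).2 + 1 / 8 :=
  heightAt_lt_of_above hM hl (hfs i) (hf.above hij)

lemma le_heightAt (hf : Sweeps L f) (hM : 0 < M) (hfs : ∀ i, f i ∈ thinStrip M s)
    (hl : |(L j).1| ≤ 2 * M) (hji : j ≤ i.castSucc) : (f i).2 - 1 / 8 ≤ heightAt (L j) s :=
  le_heightAt_of_not_above hM hl (hfs i) (hf.not_above hji)

lemma injective (hf : Sweeps L f) : Function.Injective f := by
  have not_lt_of_eq {i i' : Fin k} (h : f i = f i') : ¬ i < i' := fun hlt =>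
    hf.not_above (j := i'.castSucc) le_rfl (h ▸ hf.above (Fin.castSucc_lt_castSucc_iff.2 hlt))
  exact fun i i' h => le_antisymm (not_lt.1 (not_lt_of_eq h.symm)) (not_lt.1 (not_lt_of_eq h))

end Strips

section SixPoints

variable {L : Fin 7 → ℝ × ℝ} {f g : Fin 6 → Pt} {M s t K N : ℝ}

lemma heightAt_drops_of_lacunary (hf : Sweeps L f) (hM : 0 < M)
    (hfs : ∀ i, f i ∈ thinStrip M s) (hL : ∀ j, 0 < j → j < 6 → |(L j).1| ≤ 2 * M)
    (hK : 2 ≤ K) (hone : ∀ i, 1 ≤ (f i).2)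
    (hlac : ∀ i j, i ≠ j → K * (f i).2 ≤ (f j).2 ∨ K * (f j).2 ≤ (f i).2) :
    (K - 2) * (f 2).2 ≤ heightAt (L 1) s - heightAt (L 3) s ∧
      heightAt (L 3) s - heightAt (L 5) s ≤ 2 * (f 2).2 := by
  have hL₁ := hf.le_heightAt (i := 1) hM hfs (hL 1 (by decide) (by decide)) (by decide)
  have hL₂ := hf.heightAt_lt (i := 1) hM hfs (hL 2 (by decide) (by decide)) (by decide)
  have hL₂' := hf.le_heightAt (i := 2) hM hfs (hL 2 (by decide) (by decide)) (by decide)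
  have hL₃ := hf.heightAt_lt (i := 2) hM hfs (hL 3 (by decide) (by decide)) (by decide)
  have hL₅ := hf.le_heightAt (i := 5) hM hfs (hL 5 (by decide) (by decide)) (by decide)
  have hdescent : K * (f 2).2 ≤ (f 1).2 := by
    refine (hlac 2 1 (by decide)).resolve_right fun hascent => ?_
    nlinarith [hone 1]
  constructor <;> linarith [hone 2, hone 5]

lemma heightAt_drops_of_unit_separated (hg : Sweeps L g) (hM : 0 < M)
    (hgt : ∀ i, g i ∈ thinStrip M t) (hL : ∀ j, 0 < j → j < 6 → |(L j).1| ≤ 2 * M)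
    (hN : ∀ i, (g i).2 ≤ N) (hsep : ∀ i j, i ≠ j → 1 ≤ |(g i).2 - (g j).2|) :
    0 ≤ heightAt (L 1) t - heightAt (L 3) t ∧ heightAt (L 1) t - heightAt (L 3) t ≤ N + 1 ∧
      1 / 2 ≤ heightAt (L 3) t - heightAt (L 5) t := by
  have hdescent (i i' : Fin 6) (j : Fin 7) (hij : i.castSucc < j) (hji : j ≤ i'.castSucc)
      (hj : j < 6) : (g i').2 + 1 ≤ (g i).2 := by
    have hlt := hg.heightAt_lt hM hgt (hL j hij.pos hj) hij
    have hle := hg.le_heightAt hM hgt (hL j hij.pos hj) hji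
    rcases le_abs.1 (hsep i i' (fun h => (h ▸ hij).not_ge hji)) with h | h <;> linarith
  have hL₁ := hg.heightAt_lt (i := 0) hM hgt (hL 1 (by decide) (by decide)) (by decide)
  have hL₁' := hg.le_heightAt (i := 1) hM hgt (hL 1 (by decide) (by decide)) (by decide)
  have hL₃ := hg.heightAt_lt (i := 2) hM hgt (hL 3 (by decide) (by decide)) (by decide)
  have hL₃' := hg.le_heightAt (i := 3) hM hgt (hL 3 (by decide) (by decide)) (by decide)
  have hL₅ := hg.heightAt_lt (i := 4) hM hgt (hL 5 (by decide) (by decide)) (by decide)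
  have hdescent₁₂ := hdescent 1 2 2 (by decide) (by decide) (by decide)
  have hdescent₃₄ := hdescent 3 4 4 (by decide) (by decide) (by decide)
  refine ⟨by linarith, ?_, by linarith⟩
  linarith [hN 0, (hgt 3).2.1]

lemma not_concurrent (hf : Sweeps L f) (hg : Sweeps L g) (hM : 1 ≤ M) (hst : s + 1 ≤ t)
    (hfs : ∀ i, f i ∈ thinStrip M s) (hgt : ∀ i, g i ∈ thinStrip M t) (hKN : 4 * N + 6 < K)
    (hone : ∀ i, 1 ≤ (f i).2)
    (hlac : ∀ i j, i ≠ j → K * (f i).2 ≤ (f j).2 ∨ K * (f j).2 ≤ (f i).2)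
    (hN : ∀ i, (g i).2 ≤ N) (hsep : ∀ i j, i ≠ j → 1 ≤ |(g i).2 - (g j).2|) (q : Pt) :
    ¬ ∀ j, q.2 = heightAt (L j) q.1 := by
  intro hq
  have hM₀ : 0 < M := by linarith
  have hN₀ : 0 ≤ N := (hgt 0).2.1.trans (hN 0)
  have hL (j : Fin 7) (hj₀ : 0 < j) (hj₆ : j < 6) : |(L j).1| ≤ 2 * M :=
    hf.abs_slope_le (i := 0) (i' := 5) hg hM hst hfs hgt hj₀ (Fin.le_castSucc_iff.2 hj₆)
  obtain ⟨hf₁₃, hf₃₅⟩ :=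
    hf.heightAt_drops_of_lacunary hM₀ hfs hL (by linarith) hone hlac
  obtain ⟨hg₁₃, hg₁₃', hg₃₅⟩ := hg.heightAt_drops_of_unit_separated hM₀ hgt hL hN hsep
  have hβ := hone 2
  have hproportional := heightAt_sub_mul_comm_of_concurrent (hq 1) (hq 3) (hq 5) t s
  have : (N + 1) * (2 * (f 2).2) < (N + 1) * (2 * (f 2).2) := by
    calc (N + 1) * (2 * (f 2).2) < 1 / 2 * ((K - 2) * (f 2).2) := by nlinarith
      _ ≤ (heightAt (L 3) t - heightAt (L 5) t) * (heightAt (L 1) s - heightAt (L 3) s) :=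
        mul_le_mul hg₃₅ hf₁₃ (mul_nonneg (by linarith) (by linarith)) (by linarith)
      _ = (heightAt (L 1) t - heightAt (L 3) t) * (heightAt (L 3) s - heightAt (L 5) s) :=
        hproportional.symm
      _ ≤ (heightAt (L 1) t - heightAt (L 3) t) * (2 * (f 2).2) := by gcongr
      _ ≤ (N + 1) * (2 * (f 2).2) := by gcongr
  exact this.false

end SixPoints

end Sweeps

lemma HasFocalParallelSet.le_five {B R : Finset Pt} {k : ℕ} {M s t K N : ℝ}
    (h : HasFocalParallelSet B R k) (hM : 1 ≤ M) (hst : s + 1 ≤ t)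
    (hB : ↑B ⊆ thinStrip M s) (hR : ↑R ⊆ thinStrip M t) (hKN : 4 * N + 6 < K)
    (hone : ∀ p ∈ B, 1 ≤ p.2)
    (hlac : (B : Set Pt).Pairwise fun p q => K * p.2 ≤ q.2 ∨ K * q.2 ≤ p.2)
    (hN : ∀ p ∈ R, p.2 ≤ N) (hsep : (R : Set Pt).Pairwise fun p q => 1 ≤ |p.2 - q.2|) :
    k ≤ 5 := by
  by_contra! hk
  obtain ⟨L, ⟨q, hq⟩, B', hB', R', hR', -, -, hL⟩ := h
  obtain ⟨f, hfB', hf⟩ := exists_sweeps_of_ssubset fun i => (hL i).1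
  obtain ⟨g, hgR', hg⟩ := exists_sweeps_of_ssubset fun i => (hL i).2
  have hfB (i) : f i ∈ B := hB' (hfB' i)
  have hgR (i) : g i ∈ R := hR' (hgR' i)
  have hf₆ := hf.castLE (Nat.succ_le_of_lt hk)
  have hg₆ := hg.castLE (Nat.succ_le_of_lt hk)
  exact hf₆.not_concurrent hg₆ hM hst (fun i => hB (hfB _)) (fun i => hR (hgR _)) hKN
    (fun i => hone _ (hfB _)) (fun i j hij => hlac (hfB _) (hfB _) (hf₆.injective.ne hij))
    (fun i => hN _ (hgR _)) (fun i j hij => hsep (hgR _) (hgR _) (hg₆.injective.ne hij))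
    q fun j => hq _

/-! ### Parabolic arcs -/

/-- The arc of the parabola `x = s + ε * y ^ 2` over the heights `0 ≤ y ≤ M`. -/
def parabolaArc (ε M s : ℝ) : Set Pt := {p | p.1 = s + ε * p.2 ^ 2 ∧ p.2 ∈ Icc 0 M}

/-- The point at height `y` of the parabola `x = s + ε * y ^ 2`. -/
def parabolaPoint (ε s : ℝ) : ℝ ↪ Pt where
  toFun y := (s + ε * y ^ 2, y)
  inj' _ _ h := congrArg Prod.snd h

section ParabolaArc

variable {ε M s t : ℝ}

lemma snd_injOn_parabolaArc : InjOn Prod.snd (parabolaArc ε M s) :=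
  fun p hp q hq h => Prod.ext (by rw [hp.1, hq.1, h]) h

lemma genPos_parabolaArc (hε : ε ≠ 0) : GenPos (parabolaArc ε M s) := by
  intro p hp q hq r hr hpq hpr hqr hcol
  have hdet : det2 p q r = ε * (q.2 - p.2) * (r.2 - p.2) * (q.2 - r.2) := by
    rw [det2, hp.1, hq.1, hr.1]; ring
  have snd_sub_ne {a b : Pt} (ha : a ∈ parabolaArc ε M s) (hb : b ∈ parabolaArc ε M s)
      (hab : a ≠ b) : a.2 - b.2 ≠ 0 := sub_ne_zero.2 (snd_injOn_parabolaArc.ne ha hb hab)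
  have hne : det2 p q r ≠ 0 := by
    rw [hdet]
    exact mul_ne_zero (mul_ne_zero (mul_ne_zero hε (snd_sub_ne hq hp hpq.symm))
      (snd_sub_ne hr hp hpr.symm)) (snd_sub_ne hq hr hqr)
  exact hne (det2_eq_zero_of_collinear hcol)

lemma parabolaArc_subset_thinStrip (hε : 0 ≤ ε) (hM : 0 < M) (hεM : ε * M ^ 3 ≤ 1 / 16) :
    parabolaArc ε M s ⊆ thinStrip M s := by
  rintro p ⟨hp, hp₀, hpM⟩
  have hbend : ε * p.2 ^ 2 ≤ 1 / (16 * M) := by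
    calc ε * p.2 ^ 2 ≤ ε * M ^ 2 := by gcongr
      _ = ε * M ^ 3 / M := by field_simp
      _ ≤ 1 / 16 / M := by gcongr
      _ = 1 / (16 * M) := by rw [div_div]
  exact ⟨⟨by rw [hp]; exact le_add_of_nonneg_right (by positivity), by rw [hp]; gcongr⟩, hp₀, hpM⟩

lemma parabolaArc_avoids_thinStrip (hε : 0 ≤ ε) (hM : 1 ≤ M) (hεM : ε * M ^ 3 ≤ 1 / 16)
    (hst : 1 ≤ |s - t|) : Avoids (parabolaArc ε M s) (thinStrip M t) := by
  rintro p ⟨hp, hp₀, hpM⟩ q ⟨hq, hq₀, hqM⟩ hpq x hx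
  rw [(convex_thinStrip M t).convexHull_eq] at hx
  have hdet : det2 p q x =
      (q.2 - p.2) * ((s - x.1) + (ε * (p.2 + q.2) * x.2 - ε * p.2 * q.2)) := by
    rw [det2, hp, hq]; ring
  rw [hdet]
  refine mul_ne_zero
    (sub_ne_zero.2 (snd_injOn_parabolaArc.ne ⟨hq, hq₀, hqM⟩ ⟨hp, hp₀, hpM⟩ hpq.symm)) ?_
  have hx₁' := fst_le_of_mem_thinStrip hM hx
  obtain ⟨⟨hx₁, -⟩, hx₂, hx₂M⟩ := hx
  have hεM₂ : ε * M * M ≤ 1 / 16 := by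
    calc ε * M * M = ε * M ^ 2 := by ring
      _ ≤ ε * M ^ 3 := by gcongr; norm_num
      _ ≤ 1 / 16 := hεM
  have hsum : ε * (p.2 + q.2) * x.2 ≤ 1 / 8 := by
    calc ε * (p.2 + q.2) * x.2 ≤ ε * (M + M) * M := by gcongr
      _ ≤ 1 / 8 := by linarith
  have hsum₀ : 0 ≤ ε * (p.2 + q.2) * x.2 := by positivity
  have hprod : ε * p.2 * q.2 ≤ 1 / 16 := le_trans (by gcongr) hεM₂
  have hprod₀ : 0 ≤ ε * p.2 * q.2 := by positivity
  intro h
  rcases le_abs.1 hst with h | h <;> linarith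

lemma coe_map_parabolaPoint_subset {H : Finset ℝ} (hH : ↑H ⊆ Icc 0 M) :
    ↑(H.map (parabolaPoint ε s)) ⊆ parabolaArc ε M s := by
  rw [Finset.coe_map]
  rintro _ ⟨y, hy, rfl⟩
  exact ⟨rfl, hH hy⟩

lemma pairwise_map_parabolaPoint {H : Finset ℝ} {r : ℝ → ℝ → Prop}
    (hr : (H : Set ℝ).Pairwise r) :
    (H.map (parabolaPoint ε s) : Set Pt).Pairwise fun p q => r p.2 q.2 := by
  rw [Finset.coe_map]
  exact (parabolaPoint ε s).injective.injOn.pairwise_image.2 hr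

lemma oneAvoiding_map_parabolaPoint {n : ℕ} {H H' : Finset ℝ} (hε : 0 < ε) (hM : 1 ≤ M)
    (hεM : ε * M ^ 3 ≤ 1 / 16) (hst : s + 1 ≤ t) (hH : ↑H ⊆ Icc 0 M) (hH' : ↑H' ⊆ Icc 0 M)
    (hn : H.card = n) (hn' : H'.card = n) :
    OneAvoiding n (H.map (parabolaPoint ε s)) (H'.map (parabolaPoint ε t)) := by
  have hB : ↑(H.map (parabolaPoint ε s)) ⊆ parabolaArc ε M s := coe_map_parabolaPoint_subset hH
  have hR : ↑(H'.map (parabolaPoint ε t)) ⊆ parabolaArc ε M t := coe_map_parabolaPoint_subset hH'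
  have hstrip (a : ℝ) : parabolaArc ε M a ⊆ thinStrip M a :=
    parabolaArc_subset_thinStrip hε.le (by linarith) hεM
  have hsep := (lineSeparated_thinStrip hM hst).mono (hB.trans (hstrip s)) (hR.trans (hstrip t))
  have hBR := (parabolaArc_avoids_thinStrip hε.le hM hεM (le_abs.2 (by right; linarith))).mono hB
    (hR.trans (hstrip t))
  have hRB := (parabolaArc_avoids_thinStrip hε.le hM hεM (le_abs.2 (by left; linarith))).mono hR
    (hB.trans (hstrip s))
  have hgen := ((genPos_parabolaArc hε.ne').mono hB).union ((genPos_parabolaArc hε.ne').mono hR)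
    hBR hRB
  exact ⟨⟨hsep.disjoint, by rw [Finset.card_map, hn], by rw [Finset.card_map, hn'], hgen, hsep⟩,
    hBR⟩

lemma HasFocalParallelSet.le_five_of_map_parabolaPoint {k : ℕ} {K N : ℝ} {H H' : Finset ℝ}
    (h : HasFocalParallelSet (H.map (parabolaPoint ε s)) (H'.map (parabolaPoint ε t)) k)
    (hε : 0 ≤ ε) (hM : 1 ≤ M) (hεM : ε * M ^ 3 ≤ 1 / 16) (hst : s + 1 ≤ t) (hKN : 4 * N + 6 < K)
    (hNM : N ≤ M) (hH : ↑H ⊆ Icc 1 M) (hH' : ↑H' ⊆ Icc 0 N)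
    (hlac : (H : Set ℝ).Pairwise fun x y => K * x ≤ y ∨ K * y ≤ x)
    (hsep : (H' : Set ℝ).Pairwise fun x y => 1 ≤ |x - y|) : k ≤ 5 := by
  have hstrip (a : ℝ) : parabolaArc ε M a ⊆ thinStrip M a :=
    parabolaArc_subset_thinStrip hε (by linarith) hεM
  have hB := coe_map_parabolaPoint_subset (ε := ε) (s := s)
    (hH.trans (Icc_subset_Icc_left zero_le_one))
  have hR := coe_map_parabolaPoint_subset (ε := ε) (s := t) (hH'.trans (Icc_subset_Icc_right hNM))
  exact h.le_five hM hst (hB.trans (hstrip s)) (hR.trans (hstrip t)) hKN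
    (Finset.forall_mem_map.2 fun y hy => (hH hy).1) (pairwise_map_parabolaPoint hlac)
    (Finset.forall_mem_map.2 fun y hy => (hH' hy).2) (pairwise_map_parabolaPoint hsep)

end ParabolaArc

/-! ### The two height sequences -/

/-- The blue heights `1, K, …, K ^ (n - 1)`. -/
noncomputable def geometricHeights (K n : ℕ) : Finset ℝ :=
  (Finset.range n).image fun j => (K : ℝ) ^ j

/-- The red heights `0, 1, …, n - 1`. -/
def unitHeights (n : ℕ) : Finset ℝ := (Finset.range n).map Nat.castEmbedding

section Heights

variable {K n : ℕ}

lemma card_geometricHeights (hK : 1 < K) : (geometricHeights K n).card = n := by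
  rw [geometricHeights, Finset.card_image_of_injective _
    (pow_right_injective₀ (by positivity) (by exact_mod_cast hK.ne')), Finset.card_range]

lemma card_unitHeights : (unitHeights n).card = n := by
  rw [unitHeights, Finset.card_map, Finset.card_range]

lemma geometricHeights_subset_Icc (hK : 1 ≤ K) :
    ↑(geometricHeights K n) ⊆ Icc 1 ((K : ℝ) ^ n) := by
  intro y hy
  obtain ⟨j, hj, rfl⟩ := Finset.mem_image.1 hy
  have hK' : (1 : ℝ) ≤ K := by exact_mod_cast hK
  exact ⟨one_le_pow₀ hK', pow_le_pow_right₀ hK' (Finset.mem_range.1 hj).le⟩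

lemma unitHeights_subset_Icc : ↑(unitHeights n) ⊆ Icc 0 (n : ℝ) := by
  intro y hy
  obtain ⟨j, hj, rfl⟩ := Finset.mem_map.1 hy
  exact ⟨Nat.cast_nonneg j, Nat.cast_le.2 (Finset.mem_range.1 hj).le⟩

lemma pairwise_geometricHeights (hK : 1 ≤ K) :
    (geometricHeights K n : Set ℝ).Pairwise fun x y => K * x ≤ y ∨ K * y ≤ x := by
  intro x hx y hy hxy
  obtain ⟨i, -, rfl⟩ := Finset.mem_image.1 hx
  obtain ⟨j, -, rfl⟩ := Finset.mem_image.1 hy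
  have hK' : (1 : ℝ) ≤ K := by exact_mod_cast hK
  have hij : i ≠ j := fun h => hxy (by rw [h])
  simp only [← pow_succ']
  exact hij.lt_or_gt.imp (pow_le_pow_right₀ hK') (pow_le_pow_right₀ hK')

lemma pairwise_unitHeights :
    (unitHeights n : Set ℝ).Pairwise fun x y => 1 ≤ |x - y| := by
  intro x hx y hy hxy
  obtain ⟨i, -, rfl⟩ := Finset.mem_map.1 hx
  obtain ⟨j, -, rfl⟩ := Finset.mem_map.1 hy
  have hij : (i : ℤ) - j ≠ 0 := sub_ne_zero.2 fun h => hxy (by rw [Int.ofNat_inj.1 h])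
  simpa using (Int.cast_le (R := ℝ)).2 (Int.one_le_abs hij)

end Heights

theorem exists_oneAvoiding_focalParallelSet_bounded :
    ∃ c : ℕ, ∀ n : ℕ, 0 < n → ∃ B R : Finset Pt, OneAvoiding n B R ∧
      ∀ k : ℕ, HasFocalParallelSet B R k → k ≤ c := by
  refine ⟨5, fun n _ => ?_⟩
  obtain ⟨K, hK⟩ : ∃ K : ℕ, K = 4 * n + 8 := ⟨_, rfl⟩
  obtain ⟨M, hM⟩ : ∃ M : ℝ, M = (K : ℝ) ^ n := ⟨_, rfl⟩
  have hM₁ : 1 ≤ M := hM ▸ one_le_pow₀ (by exact_mod_cast (by omega : 1 ≤ K))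
  have hnM : (n : ℝ) ≤ M := hM ▸ by exact_mod_cast (Nat.lt_pow_self (by omega : 1 < K)).le
  obtain ⟨ε, hε, hεM⟩ : ∃ ε : ℝ, 0 < ε ∧ ε * M ^ 3 ≤ 1 / 16 :=
    ⟨1 / (16 * M ^ 3), by positivity, by field_simp; rfl⟩
  have hB : ↑(geometricHeights K n) ⊆ Icc 1 M := hM ▸ geometricHeights_subset_Icc (by omega)
  have hR : ↑(unitHeights n) ⊆ Icc 0 (n : ℝ) := unitHeights_subset_Icc
  refine ⟨(geometricHeights K n).map (parabolaPoint ε 0), (unitHeights n).map (parabolaPoint ε 1),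
    ?_, fun k hk => ?_⟩
  · exact oneAvoiding_map_parabolaPoint hε hM₁ hεM (zero_add 1).le
      (hB.trans (Icc_subset_Icc_left zero_le_one)) (hR.trans (Icc_subset_Icc_right hnM))
      (card_geometricHeights (by omega)) card_unitHeights
  · have hKn : 4 * (n : ℝ) + 6 < K := by exact_mod_cast (by omega : 4 * n + 6 < K)
    exact hk.le_five_of_map_parabolaPoint hε.le hM₁ hεM (zero_add 1).le hKn hnM hB hR
      (pairwise_geometricHeights (by omega)) pairwise_unitHeights
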